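/- For |q|<1, G(q)^2·H(q^2) − G(q^2)·H(q)^2 = 2q·H(q)·H(q^2)^2 / (q^5; q^{10})_∞^2. -/

import Mathlib

/-!
Write `t i = (q ^ i; q ^ 10)_∞ (q ^ (10 - i); q ^ 10)_∞` (here `tt q i`). Splitting products over
residues modulo 10 gives `G(q) = 1 / (t 1 * t 4)`, `H(q) = 1 / (t 2 * t 3)`, `G(q²) = 1 / t 2`,
`H(q²) = 1 / t 4` and `(q⁵; q¹⁰)_∞² = t 5`. After clearing denominators the theorem becomes
`t2³ t3² t5 - t1² t4³ t5 = 2 q t1² t2² t3 t4`, which is `t2 t3` times the first minus `t1 t4` times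
the second of the two quartic relations
* `t2² t3 t5 = t1 t3 t4² + q t1² t2 t4`,
* `t1 t4² t5 = t2 t3² t4 - q t1 t2² t3`.

Both relations (`weierstrass`) are instances of the three-term relation for theta functions.
With `Θ(z) = (z; p)_∞ (p / z; p)_∞`, the product `Θ(x y) Θ(x / y)` is, up to a constant and the
factor `x`, a `2 × 2` determinant in the vectors `(A x, B x)` and `(A y, B y)` (`theta_det`), so the
three-term relation is the Plücker relation between the `2 × 2` minors of a `2 × 4` matrix. The
determinant formula comes from the Jacobi triple product (`jacobi_triple`) by multiplying two
bilateral theta series and splitting the double sum by the parity of the sum of the indices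
(`theta_mul`). The triple product itself is the limit of the finite `q`-binomial theorem
(`q_binomial`), by dominated convergence.
-/

noncomputable def qp (a q : ℂ) : ℂ := ∏' k : ℕ, (1 - a * q ^ k)

noncomputable def GG (q : ℂ) : ℂ := 1 / (qp q (q ^ 5) * qp (q ^ 4) (q ^ 5))

noncomputable def HH (q : ℂ) : ℂ := 1 / (qp (q ^ 2) (q ^ 5) * qp (q ^ 3) (q ^ 5))

noncomputable def RR (q : ℂ) : ℂ :=
  (qp q (q ^ 5) * qp (q ^ 4) (q ^ 5)) / (qp (q ^ 2) (q ^ 5) * qp (q ^ 3) (q ^ 5))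

noncomputable def phi (q : ℂ) : ℂ := ∑' n : ℤ, q ^ (n.natAbs ^ 2)

noncomputable def psi (q : ℂ) : ℂ := ∑' n : ℕ, q ^ (n * (n + 1) / 2)

/-! ### Infinite products -/

lemma qp_summable {p : ℂ} (hp : ‖p‖ < 1) (a : ℂ) : Summable fun k : ℕ => ‖-(a * p ^ k)‖ := by
  simp only [norm_neg, norm_mul, norm_pow]
  exact (summable_geometric_of_lt_one (norm_nonneg _) hp).mul_left _

lemma qp_multipliable {p : ℂ} (hp : ‖p‖ < 1) (a : ℂ) : Multipliable fun k : ℕ => 1 - a * p ^ k := by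
  simpa only [sub_eq_add_neg] using multipliable_one_add_of_summable (qp_summable hp a)

lemma qp_ne_zero {p a : ℂ} (hp : ‖p‖ < 1) (ha : ‖a‖ < 1) : qp a p ≠ 0 := by
  have h := tprod_one_add_ne_zero_of_summable (f := fun k : ℕ => -(a * p ^ k)) (fun k => ?_)
    (qp_summable hp a)
  · simpa only [qp, sub_eq_add_neg] using h
  · intro h0
    have h1 : a * p ^ k = 1 := by linear_combination -h0
    have h2 : ‖a * p ^ k‖ < 1 := by
      rw [norm_mul, norm_pow]
      calc ‖a‖ * ‖p‖ ^ k ≤ ‖a‖ * 1 := by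
            gcongr
            exact pow_le_one₀ (norm_nonneg _) hp.le
        _ < 1 := by simpa using ha
    rw [h1] at h2
    simp at h2

lemma qp_split {p : ℂ} (hp : ‖p‖ < 1) (a : ℂ) : qp a p = qp a (p ^ 2) * qp (a * p) (p ^ 2) := by
  have hp2 : ‖p ^ 2‖ < 1 := by
    rw [norm_pow]; exact pow_lt_one₀ (norm_nonneg _) hp (by norm_num)
  unfold qp
  have he : (fun k : ℕ => 1 - a * (p ^ 2) ^ k) = fun k => 1 - a * p ^ (2 * k) := by
    funext k; rw [pow_mul]
  have ho : (fun k : ℕ => 1 - a * p * (p ^ 2) ^ k) = fun k => 1 - a * p ^ (2 * k + 1) := by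
    funext k; rw [← pow_mul]; ring
  have h1 := qp_multipliable hp2 a
  have h2 := qp_multipliable hp2 (a * p)
  rw [he] at h1 ⊢
  rw [ho] at h2 ⊢
  exact (tprod_even_mul_odd (f := fun k : ℕ => 1 - a * p ^ k) h1 h2).symm

/-! ### Bilateral theta series -/

/-- The bilateral theta series `∑ s ^ (j ^ 2) * w ^ j` over the integers. -/
noncomputable def thetaSer (s w : ℂ) : ℂ := ∑' j : ℤ, s ^ (j ^ 2) * w ^ j

lemma summable_half {s : ℂ} (hs0 : s ≠ 0) (hs : ‖s‖ < 1) {w : ℂ} (hw : w ≠ 0) :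
    Summable fun j : ℕ => ‖s ^ (j ^ 2) * w ^ j‖ := by
  refine summable_of_ratio_test_tendsto_lt_one (l := 0) zero_lt_one
    (Filter.Eventually.of_forall fun n => ?_) ?_
  · exact norm_ne_zero_iff.mpr (mul_ne_zero (pow_ne_zero _ hs0) (pow_ne_zero _ hw))
  have : (fun n : ℕ => ‖‖s ^ ((n + 1) ^ 2) * w ^ (n + 1)‖‖ / ‖‖s ^ (n ^ 2) * w ^ n‖‖)
      = fun n => (‖s‖ * ‖w‖) * (‖s‖ ^ 2) ^ n := by
    funext n
    have h1 : ‖s‖ ≠ 0 := by simpa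
    have h2 : ‖w‖ ≠ 0 := by simpa
    simp only [norm_norm, norm_mul, norm_pow]
    field_simp
    ring
  rw [this]
  simpa using (tendsto_pow_atTop_nhds_zero_of_lt_one (by positivity)
    (pow_lt_one₀ (norm_nonneg s) hs two_ne_zero)).const_mul (‖s‖ * ‖w‖)

lemma summable_norm_theta {s : ℂ} (hs0 : s ≠ 0) (hs : ‖s‖ < 1) {w : ℂ} (hw : w ≠ 0) :
    Summable fun j : ℤ => ‖s ^ (j ^ 2) * w ^ j‖ := by
  rw [summable_int_iff_summable_nat_and_neg]
  constructor
  · refine (summable_half hs0 hs hw).congr fun n => ?_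
    simp only [← zpow_natCast, Nat.cast_pow]
  · refine (summable_half hs0 hs (inv_ne_zero hw)).congr fun n => ?_
    simp only [← zpow_natCast, Nat.cast_pow, neg_sq, zpow_neg, inv_zpow]

/-- Pairs of integers, split by the parity of their sum. -/
lemma parity_bij : Function.Bijective
    (Sum.elim (fun ab : ℤ × ℤ => (ab.1 + ab.2, ab.1 - ab.2))
      (fun ab : ℤ × ℤ => (ab.1 + ab.2 + 1, ab.1 - ab.2))) := by
  constructor
  · rintro (⟨a, b⟩ | ⟨a, b⟩) (⟨c, d⟩ | ⟨c, d⟩) h <;> simp at h ⊢ <;> omega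
  · rintro ⟨m, n⟩
    rcases Int.even_or_odd' (m + n) with ⟨k, hk | hk⟩
    · exact ⟨Sum.inl (k, m - k), by simp; omega⟩
    · exact ⟨Sum.inr (k, m - k - 1), by simp; omega⟩

/-- The double series on the left is reindexed by `(a + b, a - b)` where the index sum is even and
by `(a + b + 1, a - b)` where it is odd; in both cases the variables `a` and `b` separate. -/
lemma theta_mul {s : ℂ} (hs0 : s ≠ 0) (hs : ‖s‖ < 1) {x y : ℂ} (hx : x ≠ 0) (hy : y ≠ 0) :
    thetaSer s (x * y) * thetaSer s (x / y) =
      thetaSer (s ^ 2) (x ^ 2) * thetaSer (s ^ 2) (y ^ 2) +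
      s * (x * thetaSer (s ^ 2) (s ^ 2 * x ^ 2)) * (y * thetaSer (s ^ 2) (s ^ 2 * y ^ 2)) := by
  have hs2 : s ^ 2 ≠ 0 := pow_ne_zero _ hs0
  have hs2' : ‖s ^ 2‖ < 1 := by
    rw [norm_pow]; exact pow_lt_one₀ (norm_nonneg _) hs (by norm_num)
  have hx2 : x ^ 2 ≠ 0 := pow_ne_zero _ hx
  have hy2 : y ^ 2 ≠ 0 := pow_ne_zero _ hy
  have S1 := summable_norm_theta hs0 hs (mul_ne_zero hx hy)
  have S2 := summable_norm_theta hs0 hs (div_ne_zero hx hy)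
  have S3 := summable_norm_theta hs2 hs2' hx2
  have S4 := summable_norm_theta hs2 hs2' hy2
  have S5 := summable_norm_theta hs2 hs2' (mul_ne_zero hs2 hx2)
  have S6 := summable_norm_theta hs2 hs2' (mul_ne_zero hs2 hy2)
  have e1 : ∀ ab : ℤ × ℤ,
      s ^ ((ab.1 + ab.2) ^ 2) * (x * y) ^ (ab.1 + ab.2) *
        (s ^ ((ab.1 - ab.2) ^ 2) * (x / y) ^ (ab.1 - ab.2)) =
      ((s ^ 2) ^ (ab.1 ^ 2) * (x ^ 2) ^ ab.1) * ((s ^ 2) ^ (ab.2 ^ 2) * (y ^ 2) ^ ab.2) := by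
    rintro ⟨a, b⟩
    simp only [div_eq_mul_inv, mul_zpow, inv_zpow', ← zpow_natCast, ← zpow_mul]
    have : s ^ ((a + b) ^ 2) * s ^ ((a - b) ^ 2) = s ^ ((2 : ℕ) * a ^ 2) * s ^ ((2 : ℕ) * b ^ 2) := by
      rw [← zpow_add₀ hs0, ← zpow_add₀ hs0]; congr 1; push_cast; ring
    have h2 : x ^ (a + b) * x ^ (a - b) = x ^ ((2 : ℕ) * a) := by
      rw [← zpow_add₀ hx]; congr 1; push_cast; ring
    have h3 : y ^ (a + b) * y ^ (-(a - b)) = y ^ ((2 : ℕ) * b) := by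
      rw [← zpow_add₀ hy]; congr 1; push_cast; ring
    rw [← h2, ← h3]
    linear_combination (x ^ (a + b) * x ^ (a - b) * y ^ (a + b) * y ^ (-(a - b))) * this
  have e2 : ∀ ab : ℤ × ℤ,
      s ^ ((ab.1 + ab.2 + 1) ^ 2) * (x * y) ^ (ab.1 + ab.2 + 1) *
        (s ^ ((ab.1 - ab.2) ^ 2) * (x / y) ^ (ab.1 - ab.2)) =
      (s * x * y) * (((s ^ 2) ^ (ab.1 ^ 2) * (s ^ 2 * x ^ 2) ^ ab.1) *
        ((s ^ 2) ^ (ab.2 ^ 2) * (s ^ 2 * y ^ 2) ^ ab.2)) := by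
    rintro ⟨a, b⟩
    simp only [div_eq_mul_inv, mul_zpow, inv_zpow', ← zpow_natCast, ← zpow_mul]
    have : s ^ ((a + b + 1) ^ 2) * s ^ ((a - b) ^ 2) =
        s ^ (1 : ℤ) * (s ^ ((2 : ℕ) * a ^ 2) * s ^ ((2 : ℕ) * a)) *
          (s ^ ((2 : ℕ) * b ^ 2) * s ^ ((2 : ℕ) * b)) := by
      simp only [← zpow_add₀ hs0]; congr 1; push_cast; ring
    have h2 : x ^ (a + b + 1) * x ^ (a - b) = x ^ ((2 : ℕ) * a) * x := by
      nth_rewrite 4 [← zpow_one x]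
      simp only [← zpow_add₀ hx]; congr 1; push_cast; ring
    have h3 : y ^ (a + b + 1) * y ^ (-(a - b)) = y ^ ((2 : ℕ) * b) * y := by
      nth_rewrite 4 [← zpow_one y]
      simp only [← zpow_add₀ hy]; congr 1; push_cast; ring
    rw [zpow_one] at this
    calc _ = (s ^ ((a + b + 1) ^ 2) * s ^ ((a - b) ^ 2)) * (x ^ (a + b + 1) * x ^ (a - b)) *
          (y ^ (a + b + 1) * y ^ (-(a - b))) := by ring
      _ = _ := by rw [this, h2, h3]; ring
  unfold thetaSer
  rw [tsum_mul_tsum_of_summable_norm S1 S2, tsum_mul_tsum_of_summable_norm S3 S4]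
  have hodd : ∀ P Q : ℂ, s * (x * P) * (y * Q) = (s * x * y) * (P * Q) := by intros; ring
  rw [hodd, tsum_mul_tsum_of_summable_norm S5 S6, ← tsum_mul_left]
  have T1 := summable_mul_of_summable_norm S3 S4
  have T2 := (summable_mul_of_summable_norm S5 S6).mul_left (s * x * y)
  rw [← (Equiv.ofBijective _ parity_bij).tsum_eq, Summable.tsum_sum]
  · simp only [Equiv.ofBijective_apply, Sum.elim_inl, Sum.elim_inr, e1, e2]
  · simpa only [Function.comp_def, Equiv.ofBijective_apply, Sum.elim_inl, e1] using T1
  · simpa only [Function.comp_def, Equiv.ofBijective_apply, Sum.elim_inr, e2] using T2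

/-- Quasi-periodicity of the theta series, from the shift `j ↦ j + 1`. -/
lemma theta_shift {s : ℂ} (hs0 : s ≠ 0) {w : ℂ} (hw : w ≠ 0) :
    thetaSer s w = s * w * thetaSer s (s ^ 2 * w) := by
  unfold thetaSer
  rw [← tsum_mul_left, ← (Equiv.addRight (1 : ℤ)).tsum_eq]
  congr 1
  funext j
  simp only [Equiv.coe_addRight, mul_zpow, ← zpow_natCast, ← zpow_mul, zpow_add_one₀ hw]
  have : s ^ ((j + 1) ^ 2) = s * s ^ (j ^ 2) * s ^ ((2 : ℕ) * j) := by
    nth_rewrite 2 [← zpow_one s]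
    simp only [← zpow_add₀ hs0]; congr 1; push_cast; ring
  rw [this]; ring

/-! ### The Jacobi triple product -/

/-- The Gaussian binomial coefficient `[N choose m]` in base `p`, by the Pascal recursion. The
truncated subtraction is harmless: `gaussBinom p N m` vanishes when `N < m`. -/
noncomputable def gaussBinom (p : ℂ) : ℕ → ℕ → ℂ
  | _, 0 => 1
  | 0, _ + 1 => 0
  | N + 1, m + 1 => gaussBinom p N (m + 1) + p ^ (N - m) * gaussBinom p N m

/-- The finite product `(p; p)_n`. -/
noncomputable def finPoch (p : ℂ) (n : ℕ) : ℂ := ∏ k ∈ Finset.range n, (1 - p * p ^ k)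

lemma gaussBinom_zero_right (p : ℂ) (N : ℕ) : gaussBinom p N 0 = 1 := by
  cases N <;> simp [gaussBinom]

lemma gaussBinom_eq_zero (p : ℂ) {N : ℕ} : ∀ {m : ℕ}, N < m → gaussBinom p N m = 0 := by
  induction N with
  | zero => intro m hm; cases m with
    | zero => omega
    | succ m => simp [gaussBinom]
  | succ N ih => intro m hm; cases m with
    | zero => omega
    | succ m => rw [gaussBinom, ih (by omega), ih (by omega)]; simp

lemma finPoch_succ (p : ℂ) (n : ℕ) : finPoch p (n + 1) = finPoch p n * (1 - p ^ (n + 1)) := by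
  rw [finPoch, Finset.prod_range_succ, ← finPoch, pow_succ']

/-- The factorial formula for Gaussian binomials, in a division-free form. -/
lemma gaussBinom_mul (p : ℂ) (N : ℕ) : ∀ a b : ℕ, a + b = N →
    gaussBinom p N a * finPoch p a * finPoch p b = finPoch p N := by
  induction N with
  | zero =>
    intro a b h
    obtain ⟨rfl, rfl⟩ : a = 0 ∧ b = 0 := by omega
    simp [gaussBinom, finPoch]
  | succ N ih =>
    intro a b h
    rcases a with _ | a
    · obtain rfl : b = N + 1 := by omega
      rw [gaussBinom_zero_right]; simp [finPoch]
    · rcases b with _ | b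
      · obtain rfl : a = N := by omega
        have := ih a 0 (by omega)
        rw [gaussBinom, gaussBinom_eq_zero p (Nat.lt_succ_self a), finPoch_succ]
        rw [Nat.sub_self]
        linear_combination (1 - p ^ (a + 1)) * this
      · have h1 := ih (a + 1) b (by omega)
        have h2 := ih a (b + 1) (by omega)
        have h3 : N - a = b + 1 := by omega
        rw [gaussBinom, h3, finPoch_succ p N, show N + 1 = (a + 1) + (b + 1) by omega]
        rw [finPoch_succ] at h1 ⊢
        rw [finPoch_succ] at h2 ⊢
        linear_combination (1 - p ^ (b + 1)) * h1 + p ^ (b + 1) * (1 - p ^ (a + 1)) * h2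

/-- The finite `q`-binomial theorem in base `s ^ 2`. -/
lemma q_binomial (s w : ℂ) (N : ℕ) :
    ∏ k ∈ Finset.range N, (1 + w * s ^ (2 * k + 1)) =
      ∑ m ∈ Finset.range (N + 1), s ^ (m ^ 2) * w ^ m * gaussBinom (s ^ 2) N m := by
  induction N with
  | zero => simp [gaussBinom]
  | succ N ih =>
    rw [Finset.prod_range_succ, Finset.sum_range_succ']
    have h1 : ∑ m ∈ Finset.range (N + 1),
        s ^ ((m + 1) ^ 2) * w ^ (m + 1) * gaussBinom (s ^ 2) (N + 1) (m + 1) =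
        ∑ m ∈ Finset.range (N + 1), s ^ ((m + 1) ^ 2) * w ^ (m + 1) * gaussBinom (s ^ 2) N (m + 1)
        + (∑ m ∈ Finset.range (N + 1), s ^ (m ^ 2) * w ^ m * gaussBinom (s ^ 2) N m) *
          (w * s ^ (2 * N + 1)) := by
      rw [Finset.sum_mul, ← Finset.sum_add_distrib]
      refine Finset.sum_congr rfl fun m hm => ?_
      have hm' : m ≤ N := by simpa [Nat.lt_succ_iff] using hm
      obtain ⟨d, rfl⟩ := Nat.exists_eq_add_of_le hm'
      rw [gaussBinom, Nat.add_sub_cancel_left]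
      ring
    have h2 := Finset.sum_range_succ' (fun m => s ^ (m ^ 2) * w ^ m * gaussBinom (s ^ 2) N m) (N + 1)
    rw [Finset.sum_range_succ, gaussBinom_eq_zero _ (Nat.lt_succ_self N)] at h2
    rw [h1, ih]
    simp only [gaussBinom_zero_right] at h2 ⊢
    linear_combination h2

/-- The finite form of the triple product: the `q`-binomial theorem with `2 * n` factors at
`w / s ^ (2 * n)`, the first `n` factors being inverted. -/
lemma finite_triple {s w : ℂ} (hs : s ≠ 0) (hw : w ≠ 0) (n : ℕ) :
    (∏ k ∈ Finset.range n, (1 + w * s ^ (2 * k + 1))) *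
      ∏ k ∈ Finset.range n, (1 + s ^ (2 * k + 1) / w) =
      ∑ m ∈ Finset.range (2 * n + 1), s ^ (((m : ℤ) - n) ^ 2) * w ^ ((m : ℤ) - n) *
        gaussBinom (s ^ 2) (2 * n) m := by
  have h := q_binomial s (w / s ^ (2 * n)) (2 * n)
  rw [two_mul n, Finset.prod_range_add, ← two_mul] at h
  have h1 : ∏ k ∈ Finset.range n, (1 + w / s ^ (2 * n) * s ^ (2 * (n + k) + 1)) =
      ∏ k ∈ Finset.range n, (1 + w * s ^ (2 * k + 1)) := by
    refine Finset.prod_congr rfl fun k _ => ?_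
    field_simp
    ring
  have h2 : ∏ k ∈ Finset.range n, (1 + w / s ^ (2 * n) * s ^ (2 * k + 1)) =
      (∏ k ∈ Finset.range n, (1 + s ^ (2 * k + 1) / w)) * (w ^ n / s ^ (n ^ 2)) := by
    have h3 : w ^ n / s ^ (n ^ 2) = ∏ k ∈ Finset.range n, (w / s ^ (2 * k + 1)) := by
      clear h h1
      induction n with
      | zero => simp
      | succ n ih => rw [Finset.prod_range_succ, ← ih]; field_simp; ring
    rw [h3, ← Finset.prod_mul_distrib, ← Finset.prod_range_reflect]
    refine Finset.prod_congr rfl fun k hk => ?_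
    obtain ⟨d, rfl⟩ := Nat.exists_eq_add_of_lt (Finset.mem_range.mp hk)
    rw [show k + d + 1 - 1 - k = d by omega]
    field_simp
    ring
  rw [h1, h2] at h
  have h4 : ∀ m : ℕ, s ^ (m ^ 2) * (w / s ^ (2 * n)) ^ m * (s ^ (n ^ 2) / w ^ n) =
      s ^ (((m : ℤ) - n) ^ 2) * w ^ ((m : ℤ) - n) := by
    intro m
    have e : ((m : ℤ) - n) ^ 2 = ((m ^ 2 : ℕ) : ℤ) + ((n ^ 2 : ℕ) : ℤ) - ((2 * n * m : ℕ) : ℤ) := by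
      push_cast; ring
    rw [e, zpow_sub₀ hs, zpow_add₀ hs, zpow_sub₀ hw]
    simp only [zpow_natCast, div_pow, ← pow_mul]
    field_simp
  have h5 : (s ^ (n ^ 2) / w ^ n) * (w ^ n / s ^ (n ^ 2)) = 1 := by field_simp
  calc _ = ((∏ k ∈ Finset.range n, (1 + s ^ (2 * k + 1) / w)) * (w ^ n / s ^ (n ^ 2)) *
        ∏ k ∈ Finset.range n, (1 + w * s ^ (2 * k + 1))) * (s ^ (n ^ 2) / w ^ n) := by
        linear_combination (-(∏ k ∈ Finset.range n, (1 + w * s ^ (2 * k + 1))) *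
          (∏ k ∈ Finset.range n, (1 + s ^ (2 * k + 1) / w))) * h5
    _ = _ := by
        rw [h, Finset.sum_mul]
        refine Finset.sum_congr rfl fun m _ => ?_
        rw [← h4]; ring

/-- The coefficient of `s ^ (j ^ 2) * w ^ j` in the finite triple product of level `n`, extended
by zero to all integers `j`. -/
noncomputable def tripleCoeff (p : ℂ) (n : ℕ) (j : ℤ) : ℂ :=
  if j.natAbs ≤ n then gaussBinom p (2 * n) (n + j).toNat else 0

lemma finite_triple_tsum {s w : ℂ} (hs : s ≠ 0) (hw : w ≠ 0) (n : ℕ) :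
    (∏ k ∈ Finset.range n, (1 + w * s ^ (2 * k + 1))) *
      ∏ k ∈ Finset.range n, (1 + s ^ (2 * k + 1) / w) =
      ∑' j : ℤ, s ^ (j ^ 2) * w ^ j * tripleCoeff (s ^ 2) n j := by
  rw [finite_triple hs hw, tsum_eq_sum
    (s := (Finset.range (2 * n + 1)).image fun m : ℕ => (m : ℤ) - n)]
  · rw [Finset.sum_image fun a _ b _ h => by simpa using h]
    refine Finset.sum_congr rfl fun m hm => ?_
    have hm' := Finset.mem_range.mp hm
    rw [tripleCoeff, if_pos (by omega), show ((n : ℤ) + (m - n)).toNat = m by omega]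
  · intro j hj
    rw [tripleCoeff, if_neg, mul_zero]
    intro hle
    refine hj (Finset.mem_image.mpr ⟨(n + j).toNat, Finset.mem_range.mpr (by omega), ?_⟩)
    omega

lemma finPoch_ne_zero {p : ℂ} (hp : ‖p‖ < 1) (n : ℕ) : finPoch p n ≠ 0 := by
  refine Finset.prod_ne_zero_iff.mpr fun k _ h0 => ?_
  have h1 : p ^ (k + 1) = 1 := by rw [pow_succ']; linear_combination -h0
  have h2 : ‖p ^ (k + 1)‖ < 1 := by
    rw [norm_pow]; exact pow_lt_one₀ (norm_nonneg _) hp (by omega)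
  rw [h1] at h2
  simp at h2

lemma tripleCoeff_eq {p : ℂ} (hp : ‖p‖ < 1) {n : ℕ} {j : ℤ} (h : j.natAbs ≤ n) :
    tripleCoeff p n j =
      finPoch p (2 * n) * (finPoch p (n + j).toNat)⁻¹ * (finPoch p (n - j).toNat)⁻¹ := by
  rw [tripleCoeff, if_pos h, ← gaussBinom_mul p (2 * n) (n + j).toNat (n - j).toNat (by omega)]
  have h1 := finPoch_ne_zero hp (n + j).toNat
  have h2 := finPoch_ne_zero hp (n - j).toNat
  field_simp

lemma finPoch_tendsto {p : ℂ} (hp : ‖p‖ < 1) :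
    Filter.Tendsto (finPoch p) Filter.atTop (nhds (qp p p)) :=
  (qp_multipliable hp p).hasProd.tendsto_prod_nat

lemma tripleCoeff_tendsto {p : ℂ} (hp : ‖p‖ < 1) (j : ℤ) :
    Filter.Tendsto (fun n => tripleCoeff p n j) Filter.atTop (nhds (qp p p)⁻¹) := by
  have hP : qp p p ≠ 0 := qp_ne_zero hp hp
  have h0 := finPoch_tendsto hp
  have a1 : Filter.Tendsto (fun n : ℕ => 2 * n) Filter.atTop Filter.atTop :=
    Filter.tendsto_atTop_atTop.mpr fun b => ⟨b, fun a _ => by omega⟩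
  have a2 : Filter.Tendsto (fun n : ℕ => ((n : ℤ) + j).toNat) Filter.atTop Filter.atTop :=
    Filter.tendsto_atTop_atTop.mpr fun b => ⟨b + j.natAbs, fun a _ => by omega⟩
  have a3 : Filter.Tendsto (fun n : ℕ => ((n : ℤ) - j).toNat) Filter.atTop Filter.atTop :=
    Filter.tendsto_atTop_atTop.mpr fun b => ⟨b + j.natAbs, fun a _ => by omega⟩
  have h1 := ((h0.comp a1).mul ((h0.comp a2).inv₀ hP)).mul ((h0.comp a3).inv₀ hP)
  rw [mul_inv_cancel₀ hP, one_mul] at h1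
  refine h1.congr' ?_
  filter_upwards [Filter.eventually_ge_atTop j.natAbs] with n hn
  exact (tripleCoeff_eq hp hn).symm

lemma tripleCoeff_bound {p : ℂ} (hp : ‖p‖ < 1) : ∃ B : ℝ, ∀ n j, ‖tripleCoeff p n j‖ ≤ B := by
  have hP : qp p p ≠ 0 := qp_ne_zero hp hp
  have h0 := finPoch_tendsto hp
  obtain ⟨M, hM⟩ := (Metric.isBounded_range_of_tendsto _ h0).exists_norm_le
  obtain ⟨K, hK⟩ := (Metric.isBounded_range_of_tendsto _ (h0.inv₀ hP)).exists_norm_le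
  have hM' : ∀ n, ‖finPoch p n‖ ≤ M := fun n => hM _ ⟨n, rfl⟩
  have hK' : ∀ n, ‖(finPoch p n)⁻¹‖ ≤ K := fun n => hK _ ⟨n, rfl⟩
  have hM0 : 0 ≤ M := (norm_nonneg _).trans (hM' 0)
  have hK0 : 0 ≤ K := (norm_nonneg _).trans (hK' 0)
  refine ⟨M * K * K, fun n j => ?_⟩
  by_cases h : j.natAbs ≤ n
  · rw [tripleCoeff_eq hp h, norm_mul, norm_mul]
    gcongr
    exacts [hM' _, hK' _, hK' _]
  · rw [tripleCoeff, if_neg h, norm_zero]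
    positivity

/-- The Jacobi triple product. -/
lemma jacobi_triple {s : ℂ} (hs0 : s ≠ 0) (hs : ‖s‖ < 1) {w : ℂ} (hw : w ≠ 0) :
    thetaSer s w =
      qp (s ^ 2) (s ^ 2) * (qp (-(w * s)) (s ^ 2) * qp (-(s / w)) (s ^ 2)) := by
  have hp : ‖s ^ 2‖ < 1 := by
    rw [norm_pow]; exact pow_lt_one₀ (norm_nonneg _) hs (by norm_num)
  have hP : qp (s ^ 2) (s ^ 2) ≠ 0 := qp_ne_zero hp hp
  obtain ⟨B, hB⟩ := tripleCoeff_bound hp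
  have L1 := ((qp_multipliable hp (-(w * s))).hasProd.tendsto_prod_nat).mul
    ((qp_multipliable hp (-(s / w))).hasProd.tendsto_prod_nat)
  have L2 : Filter.Tendsto (fun n => ∑' j : ℤ, s ^ (j ^ 2) * w ^ j * tripleCoeff (s ^ 2) n j)
      Filter.atTop (nhds (∑' j : ℤ, s ^ (j ^ 2) * w ^ j * (qp (s ^ 2) (s ^ 2))⁻¹)) := by
    refine tendsto_tsum_of_dominated_convergence
      ((summable_norm_theta hs0 hs hw).mul_right B)
      (fun j => (tripleCoeff_tendsto hp j).const_mul _)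
      (Filter.Eventually.of_forall fun n j => ?_)
    rw [norm_mul]
    gcongr
    exact hB n j
  have L3 := tendsto_nhds_unique L1 (L2.congr fun n => ?_)
  · rw [tsum_mul_right] at L3
    unfold thetaSer
    simp only [qp] at L3 hP ⊢
    rw [L3]
    field_simp
  · rw [← finite_triple_tsum hs0 hw]
    congr 1 <;> refine Finset.prod_congr rfl fun k _ => ?_
    · rw [← pow_mul]; ring
    · rw [← pow_mul]; ring

/-! ### The three-term relations -/

/-- The theta function `(z; p)_∞ (p / z; p)_∞` at `z = q ^ i`, `p = q ^ 10` (for `i ≤ 10`). -/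
noncomputable def tt (q : ℂ) (i : ℕ) : ℂ := qp (q ^ i) (q ^ 10) * qp (q ^ (10 - i)) (q ^ 10)

/-- A product `Θ(x y) Θ(x / y)` of theta functions `Θ(z) = (z; s²)_∞ (s² / z; s²)_∞` is, up to a
constant and a factor `x`, the determinant of the vectors `(A x, B x)` and `(A y, B y)`. -/
lemma theta_det {s : ℂ} (hs0 : s ≠ 0) (hs : ‖s‖ < 1) : ∃ A B : ℂ → ℂ, ∀ x y : ℂ, x ≠ 0 → y ≠ 0 →
    qp (s ^ 2) (s ^ 2) ^ 2 *
      ((qp (x * y) (s ^ 2) * qp (s ^ 2 / (x * y)) (s ^ 2)) *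
        (qp (x / y) (s ^ 2) * qp (s ^ 2 / (x / y)) (s ^ 2))) =
      x * (B x * A y - A x * B y) := by
  refine ⟨fun x => thetaSer (s ^ 2) (x ^ 2), fun x => x * thetaSer (s ^ 2) (s ^ 2 * x ^ 2),
    fun x y hx hy => ?_⟩
  have hs2 : s ^ 2 ≠ 0 := pow_ne_zero _ hs0
  -- The triple product turns `Θ(z)` into the theta series at `-z / s`, so the arguments of
  -- `theta_mul` have to be `x / s` and `-y`.
  have h1 := theta_mul hs0 hs (div_ne_zero hx hs0) (neg_ne_zero.mpr hy)
  have h2 := jacobi_triple hs0 hs (mul_ne_zero (div_ne_zero hx hs0) (neg_ne_zero.mpr hy))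
  have h3 := jacobi_triple hs0 hs (div_ne_zero (div_ne_zero hx hs0) (neg_ne_zero.mpr hy))
  have h4 := theta_shift hs2 (w := (x / s) ^ 2) (pow_ne_zero _ (div_ne_zero hx hs0))
  have e1 : -(x / s * -y * s) = x * y := by field_simp
  have e2 : -(s / (x / s * -y)) = s ^ 2 / (x * y) := by field_simp
  have e3 : -(x / s / -y * s) = x / y := by field_simp
  have e4 : -(s / (x / s / -y)) = s ^ 2 / (x / y) := by field_simp
  have e5 : s ^ 2 * (x / s) ^ 2 = x ^ 2 := by field_simp
  have e6 : (s ^ 2) ^ 2 * (x / s) ^ 2 = s ^ 2 * x ^ 2 := by field_simp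
  rw [e1, e2] at h2
  rw [e3, e4] at h3
  rw [e5, e6] at h4
  rw [h2, h3, h4, e5, neg_sq] at h1
  have e7 : s * (x / s * thetaSer (s ^ 2) (x ^ 2)) = x * thetaSer (s ^ 2) (x ^ 2) := by field_simp
  rw [e7] at h1
  linear_combination h1

/-- Three-term relations obtained from four points `r ^ a`, where `r ^ 2 = q` and `a` runs
through `7, 5, 3, 1` for the first and `9, 5, 3, 1` for the second. -/
lemma weierstrass {q : ℂ} (hq0 : q ≠ 0) (hq : ‖q‖ < 1) :
    tt q 2 ^ 2 * tt q 3 * tt q 5 = tt q 1 * tt q 3 * tt q 4 ^ 2 + q * tt q 1 ^ 2 * tt q 2 * tt q 4 ∧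
    tt q 1 * tt q 4 ^ 2 * tt q 5 = tt q 2 * tt q 3 ^ 2 * tt q 4 - q * tt q 1 * tt q 2 ^ 2 * tt q 3 := by
  obtain ⟨r, rfl⟩ : ∃ r : ℂ, q = r ^ 2 := by
    obtain ⟨r, hr⟩ := IsAlgClosed.exists_pow_nat_eq q (n := 2) two_pos
    exact ⟨r, hr.symm⟩
  have hr0 : r ≠ 0 := by rintro rfl; simp at hq0
  have hr : ‖r‖ < 1 := by
    rw [norm_pow] at hq
    exact (pow_lt_one_iff_of_nonneg (norm_nonneg _) two_ne_zero).mp hq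
  have hs : ‖r ^ 10‖ < 1 := by
    rw [norm_pow]; exact pow_lt_one₀ (norm_nonneg _) hr (by norm_num)
  have hp : ‖(r ^ 10) ^ 2‖ < 1 := by
    rw [norm_pow]; exact pow_lt_one₀ (norm_nonneg _) hs (by norm_num)
  have hP : qp ((r ^ 10) ^ 2) ((r ^ 10) ^ 2) ≠ 0 := qp_ne_zero hp hp
  obtain ⟨A, B, hAB⟩ := theta_det (pow_ne_zero 10 hr0) hs
  set P := qp ((r ^ 10) ^ 2) ((r ^ 10) ^ 2) with hPdef
  have key : ∀ i j : ℕ, j ≤ i → i ≤ 10 → P ^ 2 * (tt (r ^ 2) i * tt (r ^ 2) j) =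
      r ^ (i + j) * (B (r ^ (i + j)) * A (r ^ (i - j)) - A (r ^ (i + j)) * B (r ^ (i - j))) := by
    intro i j hji hi
    rw [← hAB _ _ (pow_ne_zero _ hr0) (pow_ne_zero _ hr0)]
    obtain ⟨d, rfl⟩ := Nat.exists_eq_add_of_le hji
    obtain ⟨c, hc⟩ := Nat.exists_eq_add_of_le hi
    have e1 : r ^ (j + d + j) * r ^ (j + d - j) = (r ^ 2) ^ (j + d) := by
      rw [Nat.add_sub_cancel_left]; ring
    have e2 : r ^ (j + d + j) / r ^ (j + d - j) = (r ^ 2) ^ j := by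
      rw [Nat.add_sub_cancel_left]; field_simp; ring
    have e3 : (r ^ 10) ^ 2 / (r ^ 2) ^ (j + d) = (r ^ 2) ^ (10 - (j + d)) := by
      rw [← pow_mul, mul_comm 10 2, pow_mul, pow_sub₀ _ (pow_ne_zero 2 hr0) hi, div_eq_mul_inv]
    have e4 : (r ^ 10) ^ 2 / (r ^ 2) ^ j = (r ^ 2) ^ (10 - j) := by
      rw [← pow_mul, mul_comm 10 2, pow_mul, pow_sub₀ _ (pow_ne_zero 2 hr0) (by omega),
        div_eq_mul_inv]
    rw [e1, e2, e3, e4, tt, tt, ← pow_mul r 10 2, mul_comm 10 2, pow_mul]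
  -- Indices above 5 are reduced by the symmetry `i ↦ 10 - i`.
  have t6 : tt (r ^ 2) 6 = tt (r ^ 2) 4 := mul_comm _ _
  have t7 : tt (r ^ 2) 7 = tt (r ^ 2) 3 := mul_comm _ _
  have k61 := key 6 1 (by norm_num) (by norm_num)
  have k21 := key 2 1 (by norm_num) (by norm_num)
  have k52 := key 5 2 (by norm_num) (by norm_num)
  have k32 := key 3 2 (by norm_num) (by norm_num)
  have k43 := key 4 3 (by norm_num) (by norm_num)
  have k41 := key 4 1 (by norm_num) (by norm_num)
  have k72 := key 7 2 (by norm_num) (by norm_num)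
  have k63 := key 6 3 (by norm_num) (by norm_num)
  have k54 := key 5 4 (by norm_num) (by norm_num)
  norm_num only [t6, t7] at k61 k21 k52 k32 k43 k41 k72 k63 k54
  generalize A (r ^ 7) = A7, B (r ^ 7) = B7, A (r ^ 5) = A5, B (r ^ 5) = B5, A (r ^ 3) = A3,
    B (r ^ 3) = B3, A (r ^ 1) = A1, B (r ^ 1) = B1, A (r ^ 9) = A9, B (r ^ 9) = B9 at *
  have hP4 : P ^ 4 ≠ 0 := pow_ne_zero _ hP
  -- Each relation is `r ^ 12`, respectively `r ^ 14`, times a Plücker relation.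
  have mul_eqs : ∀ {a b c d : ℂ}, a = b → c = d → a * c = b * d := fun h h' => by rw [h, h']
  constructor
  · refine mul_left_cancel₀ hP4 ?_
    linear_combination mul_eqs k52 k32 - mul_eqs k43 k41 - r ^ 2 * mul_eqs k61 k21
  · refine mul_left_cancel₀ hP4 ?_
    linear_combination mul_eqs k54 k41 - mul_eqs k63 k32 + r ^ 2 * mul_eqs k72 k21

/-! ### The identity for `G` and `H` -/

theorem stmt3 (q : ℂ) (hq : ‖q‖ < 1) :
    GG q ^ 2 * HH (q ^ 2) - GG (q ^ 2) * HH q ^ 2 =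
      2 * q * HH q * HH (q ^ 2) ^ 2 / qp (q ^ 5) (q ^ 10) ^ 2 := by
  rcases eq_or_ne q 0 with rfl | hq0
  · simp [GG, HH]; ring
  have hpow : ∀ n : ℕ, n ≠ 0 → ‖q ^ n‖ < 1 := fun n hn => by
    rw [norm_pow]; exact pow_lt_one₀ (norm_nonneg _) hq hn
  have hne : ∀ i : ℕ, i ≠ 0 → i < 10 → tt q i ≠ 0 := fun i h0 h1 =>
    mul_ne_zero (qp_ne_zero (hpow 10 (by norm_num)) (hpow i h0))
      (qp_ne_zero (hpow 10 (by norm_num)) (hpow _ (by omega)))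
  have hsplit : ∀ i : ℕ, qp (q ^ i) (q ^ 5) = qp (q ^ i) (q ^ 10) * qp (q ^ (i + 5)) (q ^ 10) := by
    intro i
    rw [qp_split (hpow 5 (by norm_num)), ← pow_mul, ← pow_add]
  have g1 : GG q = 1 / (tt q 1 * tt q 4) := by
    have := hsplit 1
    rw [pow_one] at this
    rw [GG, this, hsplit 4, tt, tt]
    norm_num only [pow_one]
    congr 1; ring
  have h1 : HH q = 1 / (tt q 2 * tt q 3) := by
    rw [HH, hsplit 2, hsplit 3, tt, tt]
    norm_num only
    congr 1; ring
  have g2 : GG (q ^ 2) = 1 / tt q 2 := by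
    rw [GG, tt, ← pow_mul, ← pow_mul]
  have h2 : HH (q ^ 2) = 1 / tt q 4 := by
    rw [HH, tt, ← pow_mul, ← pow_mul, ← pow_mul]
  have h5 : qp (q ^ 5) (q ^ 10) ^ 2 = tt q 5 := sq _
  obtain ⟨hA, hB⟩ := weierstrass hq0 hq
  rw [g1, h1, g2, h2, h5]
  have n1 := hne 1 (by norm_num) (by norm_num)
  have n2 := hne 2 (by norm_num) (by norm_num)
  have n3 := hne 3 (by norm_num) (by norm_num)
  have n4 := hne 4 (by norm_num) (by norm_num)
  have n5 := hne 5 (by norm_num) (by norm_num)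
  generalize tt q 1 = t1, tt q 2 = t2, tt q 3 = t3, tt q 4 = t4, tt q 5 = t5 at *
  rw [← sub_eq_zero]
  have : (1 / (t1 * t4)) ^ 2 * (1 / t4) - 1 / t2 * (1 / (t2 * t3)) ^ 2 -
      2 * q * (1 / (t2 * t3)) * (1 / t4) ^ 2 / t5 =
      (t2 ^ 3 * t3 ^ 2 * t5 - t1 ^ 2 * t4 ^ 3 * t5 - 2 * q * t1 ^ 2 * t2 ^ 2 * t3 * t4) /
        (t1 ^ 2 * t2 ^ 3 * t3 ^ 2 * t4 ^ 3 * t5) := by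
    field_simp
  rw [this, div_eq_zero_iff]
  left
  linear_combination t2 * t3 * hA - t1 * t4 * hB
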